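/- (Escape point of α.) Let p* := (−1 + √(2√3) − √3)/2 (so p* ≈ −0.435). Then α(p*) = −1, where α(p) := p³(2+p)/(1+2p); moreover, for every real p with p* < p < 1 one has −1 < α(p) < 1, and for every real p with −1/2 < p < p* one has α(p) < −1. -/

import Mathlib

noncomputable def α (p : ℝ) : ℝ := p ^ 3 * (2 + p) / (1 + 2 * p)

noncomputable def pStar : ℝ := (-1 + Real.sqrt (2 * Real.sqrt 3) - Real.sqrt 3) / 2

/-- Factorization of the quartic `p ^ 3 (2 + p) + (1 + 2 p)` with a positive cofactor. -/
theorem alpha_escape_aux : -(1/2) < pStar ∧ ∃ g : ℝ → ℝ,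
    (∀ p, p ^ 3 * (2 + p) + (1 + 2 * p) = (p - pStar) * g p) ∧ ∀ p, -(1/2) < p → 0 < g p := by
  unfold pStar
  have hs : Real.sqrt 3 ^ 2 = 3 := Real.sq_sqrt (by norm_num)
  have hs0 : 0 ≤ Real.sqrt 3 := Real.sqrt_nonneg 3
  have ht : Real.sqrt (2 * Real.sqrt 3) ^ 2 = 2 * Real.sqrt 3 := Real.sq_sqrt (by positivity)
  have ht0 : 0 ≤ Real.sqrt (2 * Real.sqrt 3) := Real.sqrt_nonneg _
  generalize Real.sqrt (2 * Real.sqrt 3) = t at *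
  generalize Real.sqrt 3 = s at *
  have hs1 : 3 / 2 < s := by nlinarith
  have hs2 : s < 2 := by nlinarith
  have hts : s < t := by nlinarith
  refine ⟨by linarith, fun p => (p + (1 + s + t) / 2) * (p ^ 2 + (1 - s) * p + 1), ?_, ?_⟩
  · intro p
    have h1 : (p - (-1 + t - s) / 2) * (p + (1 + s + t) / 2) = p ^ 2 + (1 + s) * p + 1 := by
      linear_combination (1 / 4) * hs - (1 / 4) * ht
    rw [← mul_assoc, h1]
    linear_combination p ^ 2 * hs
  · intro p hp
    apply mul_pos
    · linarith
    · nlinarith [sq_nonneg (p + (1 - s) / 2)]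

/-- Escape point of α. -/
theorem alpha_escape_point :
    α pStar = -1 ∧
    (∀ p : ℝ, pStar < p → p < 1 → -1 < α p ∧ α p < 1) ∧
    (∀ p : ℝ, -(1/2) < p → p < pStar → α p < -1) := by
  obtain ⟨h0, g, hg, hpos⟩ := alpha_escape_aux
  unfold α
  refine ⟨?_, ?_, ?_⟩
  · have h := hg pStar
    rw [div_eq_iff (by linarith)]
    linarith
  · intro p hp hp1
    have hd : 0 < 1 + 2 * p := by linarith
    have h := hg p
    have h2 := mul_pos (sub_pos.2 hp) (hpos p (by linarith))
    constructor
    · rw [lt_div_iff₀ hd]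
      linarith
    · rw [div_lt_iff₀ hd]
      have h3 : 0 < (1 - p) * (p + 1) ^ 3 :=
        mul_pos (by linarith) (pow_pos (by linarith) 3)
      linarith
  · intro p hp hp1
    have hd : 0 < 1 + 2 * p := by linarith
    have h := hg p
    have h2 := mul_pos (sub_pos.2 hp1) (hpos p hp)
    rw [div_lt_iff₀ hd]
    linarith
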